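/- Let P be a continuous L-ordered set. Then for every x ∈ P, the L-subset ⇑x defined by ⇑x(y) = ⇓y(x) is a Scott open set of P. -/

import Mathlib

open scoped Classical

namespace FuzzyPaper

variable {L : Type*} [Order.Frame L]

/-- The inclusion L-order on L-subsets: sub(A,B) = ⨅ x, A x ⇨ B x. -/
def subF {X : Type*} (A B : X → L) : L := ⨅ x, A x ⇨ B x

/-- `e` is an L-order: reflexivity, transitivity, antisymmetry. -/
def IsLOrder {P : Type*} (e : P → P → L) : Prop :=
  (∀ x, e x x = ⊤) ∧ (∀ x y z, e x y ⊓ e y z ≤ e x z) ∧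
  (∀ x y, e x y ⊓ e y x = ⊤ → x = y)

/-- `D` is a directed L-subset of `(P, e)`. -/
def IsDirectedL {P : Type*} (e : P → P → L) (D : P → L) : Prop :=
  (⨆ x, D x) = ⊤ ∧ ∀ x y, D x ⊓ D y ≤ ⨆ z, D z ⊓ e x z ⊓ e y z

/-- `x` is a supremum of the L-subset `A`: e(x,y) = sub(A, ↓y) for all y. -/
def IsSupOf {P : Type*} (e : P → P → L) (A : P → L) (x : P) : Prop :=
  ∀ y, e x y = ⨅ z, A z ⇨ e z y

/-- The fuzzy way-below L-subset ⇓x :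
⇓x(y) = ⨅_{D directed with a supremum s} (e(x,s) ⇨ ⨆ d, D d ⊓ e(y,d)). -/
def dwb {P : Type*} (e : P → P → L) (x : P) : P → L := fun y =>
  ⨅ Ds : {Ds : (P → L) × P // IsDirectedL e Ds.1 ∧ IsSupOf e Ds.1 Ds.2},
    e x Ds.1.2 ⇨ ⨆ d, Ds.1.1 d ⊓ e y d

/-- A continuous L-ordered set: ⇓x is directed with supremum x, for each x. -/
def IsContinuousLOrder {P : Type*} (e : P → P → L) : Prop :=
  IsLOrder e ∧ ∀ x, IsDirectedL e (dwb e x) ∧ IsSupOf e (dwb e x) x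

/-- An L-dcpo: every directed L-subset has a supremum. -/
def IsLDcpo {P : Type*} (e : P → P → L) : Prop :=
  IsLOrder e ∧ ∀ D, IsDirectedL e D → ∃ x, IsSupOf e D x

/-- A continuous L-dcpo. -/
def IsContinuousLDcpo {P : Type*} (e : P → P → L) : Prop :=
  IsLDcpo e ∧ ∀ x, IsDirectedL e (dwb e x) ∧ IsSupOf e (dwb e x) x

/-- Scott open L-subsets: upper sets inaccessible by directed suprema. -/
def IsScottOpen {P : Type*} (e : P → P → L) (A : P → L) : Prop :=
  (∀ x y, A x ⊓ e x y ≤ A y) ∧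
  ∀ D s, IsDirectedL e D → IsSupOf e D s → A s = ⨆ x, A x ⊓ D x

/-- The Scott L-topology. -/
def scottOpens {P : Type*} (e : P → P → L) : Set (P → L) := {A | IsScottOpen e A}

/-- `𝒪` is a (stratified) L-topology on X. -/
def IsLTop {X : Type*} (𝒪 : Set (X → L)) : Prop :=
  (∀ A ∈ 𝒪, ∀ B ∈ 𝒪, A ⊓ B ∈ 𝒪) ∧ (∀ S ⊆ 𝒪, sSup S ∈ 𝒪) ∧
  (∀ a : L, (fun _ => a) ∈ 𝒪)

/-- T₀ separation. -/
def IsT0 {X : Type*} (𝒪 : Set (X → L)) : Prop :=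
  ∀ x y : X, (∀ A ∈ 𝒪, A x = A y) → x = y

/-- The specialization L-order of an L-topological space. -/
def specE {X : Type*} (𝒪 : Set (X → L)) : X → X → L := fun x y =>
  ⨅ A : 𝒪, (A : X → L) x ⇨ (A : X → L) y

/-- A point of 𝒪(X): preserves binary meets, arbitrary joins and constants. -/
def IsPoint {X : Type*} (𝒪 : Set (X → L)) (p : 𝒪 → L) : Prop :=
  (∀ A B C : 𝒪, (C : X → L) = (A : X → L) ⊓ (B : X → L) → p C = p A ⊓ p B) ∧
  (∀ (S : Set 𝒪) (C : 𝒪), (C : X → L) = sSup (Subtype.val '' S) →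
    p C = ⨆ A ∈ S, p A) ∧
  (∀ (a : L) (C : 𝒪), (C : X → L) = (fun _ => a) → p C = a)

/-- The inclusion L-order on maps 𝒪 → L (in particular on points). -/
def subPt {X : Type*} (𝒪 : Set (X → L)) (p q : 𝒪 → L) : L := ⨅ A, p A ⇨ q A

/-- η : x ↦ [x], where [x](A) = A(x). -/
def etaPt {X : Type*} (𝒪 : Set (X → L)) (x : X) : 𝒪 → L := fun A => (A : X → L) x

/-- L-sobriety: η is a bijection onto the set of points. -/
def IsSober {X : Type*} (𝒪 : Set (X → L)) : Prop :=
  (∀ x y : X, etaPt 𝒪 x = etaPt 𝒪 y → x = y) ∧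
  (∀ p : 𝒪 → L, IsPoint 𝒪 p → ∃ x, p = etaPt 𝒪 x)

/-- Super-compact L-subsets. -/
def IsSuperCompact {X : Type*} (𝒪 : Set (X → L)) (A : X → L) : Prop :=
  (⨆ x, A x) = ⊤ ∧ ∀ S ⊆ 𝒪, subF A (sSup S) = ⨆ V ∈ S, subF A V

/-- Interior operator. -/
def interiorF {X : Type*} (𝒪 : Set (X → L)) (A : X → L) : X → L :=
  sSup {B ∈ 𝒪 | B ≤ A}

/-- Locally super-compact L-topological spaces. -/
def IsLocallySC {X : Type*} (𝒪 : Set (X → L)) : Prop :=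
  ∀ A ∈ 𝒪, A = fun x => ⨆ B ∈ {B | IsSuperCompact 𝒪 B}, subF B A ⊓ interiorF 𝒪 B x

/-- `ℬ` is a base of the L-topology `𝒪`. -/
def IsBase {X : Type*} (𝒪 : Set (X → L)) (ℬ : Set (X → L)) : Prop :=
  ℬ ⊆ 𝒪 ∧ ∀ A ∈ 𝒪, A = fun x => ⨆ B ∈ ℬ, subF B A ⊓ B x

/-- Strong locally super-compact: a base of super-compact open sets. -/
def IsStrongLocallySC {X : Type*} (𝒪 : Set (X → L)) : Prop :=
  ∃ ℬ, IsBase 𝒪 ℬ ∧ ∀ B ∈ ℬ, IsSuperCompact 𝒪 B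

/-- Continuity of maps of L-topological spaces. -/
def LCont {X Y : Type*} (𝒪X : Set (X → L)) (𝒪Y : Set (Y → L)) (f : X → Y) : Prop :=
  ∀ B ∈ 𝒪Y, (B ∘ f) ∈ 𝒪X

/-- k(x)(y) = e(y,x) if y is compact (⇓y(y) = ⊤), and ⊥ otherwise. -/
noncomputable def kfun {P : Type*} (e : P → P → L) (x : P) : P → L := fun y =>
  if dwb e y y = ⊤ then e y x else ⊥

/-- Algebraic L-dcpo. -/
def IsAlgebraicLDcpo {P : Type*} (e : P → P → L) : Prop :=
  IsLDcpo e ∧ ∀ x, IsDirectedL e (kfun e x) ∧ IsSupOf e (kfun e x) x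

/-- Quasihomeomorphism: f^← : 𝒪Y → 𝒪X is a bijection. -/
def IsQuasiHomeo {X Y : Type*} (𝒪X : Set (X → L)) (𝒪Y : Set (Y → L)) (f : X → Y) : Prop :=
  LCont 𝒪X 𝒪Y f ∧ (∀ A ∈ 𝒪X, ∃ B ∈ 𝒪Y, B ∘ f = A) ∧
  (∀ B₁ ∈ 𝒪Y, ∀ B₂ ∈ 𝒪Y, B₁ ∘ f = B₂ ∘ f → B₁ = B₂)

/-- Subspace embedding of L-topological spaces. -/
def IsEmbeddingL {X Y : Type*} (𝒪X : Set (X → L)) (𝒪Y : Set (Y → L)) (f : X → Y) : Prop :=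
  Function.Injective f ∧ 𝒪X = {A | ∃ B ∈ 𝒪Y, B ∘ f = A}

/-- Strict embedding: a quasihomeomorphism which is a subspace embedding. -/
def IsStrictEmbedding {X Y : Type*} (𝒪X : Set (X → L)) (𝒪Y : Set (Y → L)) (f : X → Y) : Prop :=
  IsEmbeddingL 𝒪X 𝒪Y f ∧ IsQuasiHomeo 𝒪X 𝒪Y f

/-- L-sobrification: universal L-sober space over X. -/
def IsSobrification {X Y : Type*} (𝒪X : Set (X → L)) (𝒪Y : Set (Y → L)) (j : X → Y) : Prop :=
  IsLTop 𝒪Y ∧ IsSober 𝒪Y ∧ LCont 𝒪X 𝒪Y j ∧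
  ∀ (Z : Type*) (𝒪Z : Set (Z → L)), IsLTop 𝒪Z → IsSober 𝒪Z →
    ∀ f : X → Z, LCont 𝒪X 𝒪Z f →
      ∃! g : Y → Z, LCont 𝒪Y 𝒪Z g ∧ f = g ∘ j

/-!
The substance is the interpolation inequality `⇓s(x) ≤ ⨆ d, D(d) ⊓ ⇓d(x)` for a directed `D` with
supremum `s`. The union of the L-subsets `⇓d`, weighted by `D`, is again directed, because `⇓d`
increases with `d`, and again has supremum `s`, because each `d` is the supremum of `⇓d`. Testing
`⇓s(x)` against this union bounds it by `⨆ y, (⨆ d, D(d) ⊓ ⇓d(y)) ⊓ e(x, y)`, and `⇓d` is a lower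
set.
-/

section WeightedUnion

variable {P : Type*} {e : P → P → L} {D : P → L} {F : P → P → L} {s : P}

/-- The union of the L-subsets `F d`, where `F d` counts to the degree `D d`. With `F = dwb e` this
is the L-subset of the points way below some element of `D`. -/
def weightedUnion (D : P → L) (F : P → P → L) : P → L :=
  fun y => ⨆ d, D d ⊓ F d y

theorem iSup_weightedUnion_eq (hF : ∀ d, ⨆ y, F d y = ⊤) :
    ⨆ y, weightedUnion D F y = ⨆ d, D d := by
  simp only [weightedUnion]
  rw [iSup_comm]
  simp only [← inf_iSup_eq, hF, inf_top_eq]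

theorem IsDirectedL.weightedUnion_inf_le (hD : IsDirectedL e D)
    (hmono : ∀ d d' y, F d y ⊓ e d d' ≤ F d' y) (y z : P) :
    weightedUnion D F y ⊓ weightedUnion D F z ≤ ⨆ c, D c ⊓ (F c y ⊓ F c z) := by
  simp only [weightedUnion, iSup_inf_eq, inf_iSup_eq]
  refine iSup_le fun d' => iSup_le fun d => ?_
  calc (D d ⊓ F d y) ⊓ (D d' ⊓ F d' z)
      = (D d ⊓ D d') ⊓ (F d y ⊓ F d' z) := inf_inf_inf_comm ..
    _ ≤ (⨆ c, D c ⊓ e d c ⊓ e d' c) ⊓ (F d y ⊓ F d' z) := inf_le_inf_right _ (hD.2 d d')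
    _ = ⨆ c, D c ⊓ ((F d y ⊓ e d c) ⊓ (F d' z ⊓ e d' c)) := by
      rw [iSup_inf_eq]
      exact iSup_congr fun c => by ac_rfl
    _ ≤ ⨆ c, D c ⊓ (F c y ⊓ F c z) :=
      iSup_mono fun c => inf_le_inf_left _ (inf_le_inf (hmono d c y) (hmono d' c z))

theorem isDirectedL_weightedUnion (hD : IsDirectedL e D) (hF : ∀ d, IsDirectedL e (F d))
    (hmono : ∀ d d' y, F d y ⊓ e d d' ≤ F d' y) : IsDirectedL e (weightedUnion D F) := by
  refine ⟨(iSup_weightedUnion_eq fun d => (hF d).1).trans hD.1, fun y z => ?_⟩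
  calc weightedUnion D F y ⊓ weightedUnion D F z
      ≤ ⨆ c, D c ⊓ (F c y ⊓ F c z) := hD.weightedUnion_inf_le hmono y z
    _ ≤ ⨆ c, D c ⊓ ⨆ w, F c w ⊓ e y w ⊓ e z w :=
      iSup_mono fun c => inf_le_inf_left _ ((hF c).2 y z)
    _ = ⨆ w, weightedUnion D F w ⊓ e y w ⊓ e z w := by
      simp only [weightedUnion, inf_iSup_eq, iSup_inf_eq, inf_assoc]
      exact iSup_comm

theorem isSupOf_weightedUnion_iff (hF : ∀ d, IsSupOf e (F d) d) :
    IsSupOf e (weightedUnion D F) s ↔ IsSupOf e D s := by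
  have degree_upper_bound_eq (t : P) :
      ⨅ z, weightedUnion D F z ⇨ e z t = ⨅ d, D d ⇨ e d t := by
    simp only [weightedUnion, iSup_himp_eq, ← himp_himp]
    rw [iInf_comm]
    refine iInf_congr fun d => ?_
    rw [← himp_iInf_eq, ← hF d t]
  simp only [IsSupOf, degree_upper_bound_eq]

end WeightedUnion

section WayBelow

variable {P : Type*} {e : P → P → L}

theorem IsSupOf.le_rel {D : P → L} {s : P} (hs : IsSupOf e D s) (hss : e s s = ⊤) (d : P) :
    D d ≤ e d s := by
  rw [← himp_eq_top_iff, ← top_le_iff, ← hss, hs s]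
  exact iInf_le _ d

theorem isScottOpen_of_le_iSup (hrefl : ∀ x, e x x = ⊤) {A : P → L}
    (hupper : ∀ x y, A x ⊓ e x y ≤ A y)
    (hle : ∀ D s, IsDirectedL e D → IsSupOf e D s → A s ≤ ⨆ x, A x ⊓ D x) :
    IsScottOpen e A :=
  ⟨hupper, fun D s hD hs => (hle D s hD hs).antisymm <| iSup_le fun d =>
    (inf_le_inf_left _ (hs.le_rel (hrefl s) d)).trans (hupper d s)⟩

theorem le_dwb_iff {a : L} {x y : P} :
    a ≤ dwb e x y ↔
      ∀ D s, IsDirectedL e D → IsSupOf e D s → a ⊓ e x s ≤ ⨆ d, D d ⊓ e y d := by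
  simp only [dwb, le_iInf_iff, le_himp_iff, Subtype.forall, Prod.forall, and_imp]

theorem dwb_inf_rel_sup_le {D : P → L} {s : P} (hD : IsDirectedL e D) (hs : IsSupOf e D s)
    (x y : P) : dwb e x y ⊓ e x s ≤ ⨆ d, D d ⊓ e y d :=
  le_dwb_iff.mp le_rfl D s hD hs

theorem dwb_inf_rel_le_dwb_left (htrans : ∀ x y z, e x y ⊓ e y z ≤ e x z) (x x' y : P) :
    dwb e x y ⊓ e x x' ≤ dwb e x' y := by
  refine le_dwb_iff.mpr fun D s hD hs => ?_
  calc dwb e x y ⊓ e x x' ⊓ e x' s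
      = dwb e x y ⊓ (e x x' ⊓ e x' s) := inf_assoc ..
    _ ≤ dwb e x y ⊓ e x s := inf_le_inf_left _ (htrans x x' s)
    _ ≤ ⨆ d, D d ⊓ e y d := dwb_inf_rel_sup_le hD hs x y

theorem dwb_inf_rel_le_dwb_right (htrans : ∀ x y z, e x y ⊓ e y z ≤ e x z) (x y y' : P) :
    dwb e x y ⊓ e y' y ≤ dwb e x y' := by
  refine le_dwb_iff.mpr fun D s hD hs => ?_
  calc dwb e x y ⊓ e y' y ⊓ e x s
      = e y' y ⊓ (dwb e x y ⊓ e x s) := by ac_rfl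
    _ ≤ e y' y ⊓ ⨆ d, D d ⊓ e y d := inf_le_inf_left _ (dwb_inf_rel_sup_le hD hs x y)
    _ = ⨆ d, D d ⊓ (e y' y ⊓ e y d) := by
      rw [inf_iSup_eq]
      exact iSup_congr fun d => inf_left_comm ..
    _ ≤ ⨆ d, D d ⊓ e y' d := iSup_mono fun d => inf_le_inf_left _ (htrans y' y d)

theorem dwb_le_iSup_dwb_inf (htrans : ∀ x y z, e x y ⊓ e y z ≤ e x z)
    (hcont : ∀ x, IsDirectedL e (dwb e x) ∧ IsSupOf e (dwb e x) x) {D : P → L} {s : P}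
    (hD : IsDirectedL e D) (hs : IsSupOf e D s) (hss : e s s = ⊤) (x : P) :
    dwb e s x ≤ ⨆ d, dwb e d x ⊓ D d := by
  have union_directed : IsDirectedL e (weightedUnion D (dwb e)) :=
    isDirectedL_weightedUnion hD (fun d => (hcont d).1) (dwb_inf_rel_le_dwb_left htrans)
  have union_sup : IsSupOf e (weightedUnion D (dwb e)) s :=
    (isSupOf_weightedUnion_iff fun d => (hcont d).2).mpr hs
  calc dwb e s x
      = dwb e s x ⊓ e s s := by rw [hss, inf_top_eq]
    _ ≤ ⨆ y, weightedUnion D (dwb e) y ⊓ e x y :=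
      dwb_inf_rel_sup_le union_directed union_sup s x
    _ ≤ ⨆ d, dwb e d x ⊓ D d := iSup_le fun y => by
      rw [weightedUnion, iSup_inf_eq]
      refine iSup_mono fun d => ?_
      rw [inf_assoc, inf_comm]
      exact inf_le_inf_right _ (dwb_inf_rel_le_dwb_right htrans d y x)

end WayBelow

theorem stmt7_general {P : Type*} (e : P → P → L) (hrefl : ∀ x, e x x = ⊤)
    (htrans : ∀ x y z, e x y ⊓ e y z ≤ e x z)
    (hcont : ∀ x, IsDirectedL e (dwb e x) ∧ IsSupOf e (dwb e x) x) (x : P) :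
    IsScottOpen e (fun y => dwb e y x) :=
  isScottOpen_of_le_iSup hrefl (fun y z => dwb_inf_rel_le_dwb_left htrans y z x)
    fun _ s hD hs => dwb_le_iSup_dwb_inf htrans hcont hD hs (hrefl s) x

/-- In a continuous L-ordered set, ⇑x (y ↦ ⇓y(x)) is Scott open. -/
theorem stmt7 {P : Type*} (e : P → P → L) (he : IsContinuousLOrder e) (x : P) :
    IsScottOpen e (fun y => dwb e y x) :=
  stmt7_general e he.1.1 he.1.2.1 he.2 x

end FuzzyPaper
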